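/- Let N ≥ 1 and m ≥ 1 be integers. Then the limit as q → 1 (q real, q ≠ 1) of (m/(1-q))·log( Γ(N+1)·Γ(q+1) / Γ(N+q) ) equals m·(ψ(N+1) − ψ(2)). (This is the q → 1 limit of the minimal Rényi–Wehrl entropy S^{(q)}_min = (m/(1-q))·log(Γ(N+1)Γ(q+1)/Γ(N+q)) for the representation [1]^{⊗m} of SU(N)×⋯×SU(N) (m factors), giving the expected minimal Wehrl entropy for m distinguishable particles.) -/

import Mathlib

open Filter

/-- The digamma function `ψ(x) = d/dx log Γ(x)`. -/
noncomputable def digamma (x : ℝ) : ℝ := deriv (fun t => Real.log (Real.Gamma t)) x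

/-- The `q → 1` limit of the minimal Rényi–Wehrl entropy
`S^{(q)}_min = (m/(1-q))·log(Γ(N+1)Γ(q+1)/Γ(N+q))` for the representation `[1]^{⊗m}` of
`SU(N) × ⋯ × SU(N)` is the expected minimal Wehrl entropy `m(ψ(N+1) − ψ(2))` for `m`
distinguishable particles. -/
theorem renyi_wehrl_min_limit_distinguishable (N m : ℕ) (hN : 1 ≤ N) (hm : 1 ≤ m) :
    Tendsto (fun q : ℝ =>
        ((m : ℝ) / (1 - q)) * Real.log (Real.Gamma ((N : ℝ) + 1) * Real.Gamma (q + 1) /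
          Real.Gamma ((N : ℝ) + q)))
      (nhdsWithin 1 {(1 : ℝ)}ᶜ)
      (nhds ((m : ℝ) * (digamma ((N : ℝ) + 1) - digamma 2))) := by
  have key : ∀ x : ℝ, 0 < x →
      HasDerivAt (fun t => Real.log (Real.Gamma t)) (digamma x) x := by
    intro x hx
    have h1 : DifferentiableAt ℝ Real.Gamma x := by
      apply Real.differentiableAt_Gamma
      intro k hk
      have : (0 : ℝ) ≤ k := Nat.cast_nonneg k
      linarith
    exact (h1.log (Real.Gamma_pos_of_pos hx).ne').hasDerivAt
  have hN0 : (0 : ℝ) ≤ N := Nat.cast_nonneg N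
  have hA : HasDerivAt (fun q : ℝ => Real.log (Real.Gamma ((N : ℝ) + q)))
      (digamma ((N : ℝ) + 1)) 1 :=
    HasDerivAt.comp_const_add (N : ℝ) 1 (key _ (by linarith))
  have hB : HasDerivAt (fun q : ℝ => Real.log (Real.Gamma (q + 1))) (digamma 2) 1 := by
    have h2 : HasDerivAt (fun t => Real.log (Real.Gamma t)) (digamma 2) ((1 : ℝ) + 1) := by
      have h := key 2 (by norm_num)
      have e : (1 : ℝ) + 1 = 2 := by norm_num
      rw [e]
      exact h
    exact HasDerivAt.comp_add_const 1 1 h2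
  have hC := (hasDerivAt_iff_tendsto_slope.mp (hA.sub hB)).const_mul (m : ℝ)
  refine hC.congr' ?_
  have hpos : ∀ᶠ q : ℝ in nhdsWithin 1 {(1 : ℝ)}ᶜ, 0 < q :=
    nhdsWithin_le_nhds (lt_mem_nhds one_pos)
  filter_upwards [hpos, self_mem_nhdsWithin] with q hq hq1
  have hq1' : q - 1 ≠ 0 := sub_ne_zero.mpr hq1
  have hq2 : 1 - q ≠ 0 := sub_ne_zero.mpr (Ne.symm hq1)
  have g1 := (Real.Gamma_pos_of_pos (show (0 : ℝ) < N + 1 by linarith)).ne'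
  have g2 := (Real.Gamma_pos_of_pos (show (0 : ℝ) < q + 1 by linarith)).ne'
  have g3 := (Real.Gamma_pos_of_pos (show (0 : ℝ) < N + q by linarith)).ne'
  have e2 : Real.Gamma (1 + 1) = 1 := by
    rw [one_add_one_eq_two, Real.Gamma_two]
  rw [Real.log_div (mul_ne_zero g1 g2) g3, Real.log_mul g1 g2, slope_def_field]
  simp only [Pi.sub_apply, e2, Real.log_one]
  rw [show 1 - q = -(q - 1) by ring]
  field_simp
  ring
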